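/- arXiv:math/0102066 — 4 statements merged into one kernel-verified Lean document; each statement's English description precedes it below -/
import Mathlib

section
/- If σ ≤ σ′ in S_p and τ ≤ τ′ in S_q for the weak Bruhat orders, then σ∨τ ≤ σ′∨τ′ in S_{p+q+1} for the weak Bruhat order, where ∨ denotes grafting of permutations. -/
/-! Symmetric groups `Sₙ` are modelled as `Equiv.Perm (Fin n)` (with `0`-indexed letters, so
the letter `i ∈ {1, …, n}` of the paper corresponds to `i - 1 : Fin n`), with the group law
`σ · τ = σ * τ` given by composition: `(σ * τ) x = σ (τ x)`. -/

/-- `s` is a Coxeter generator `sᵢ`, i.e. the transposition of two consecutive letters. -/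
def IsAdjacentTransposition {n : ℕ} (s : Equiv.Perm (Fin n)) : Prop :=
  ∃ (i : ℕ) (h : i + 1 < n), s = Equiv.swap ⟨i, by omega⟩ ⟨i + 1, h⟩

/-- The length `l(σ)`: the least `k` such that `σ` is a product of `k` Coxeter
generators `sᵢ`. -/
noncomputable def permLength {n : ℕ} (σ : Equiv.Perm (Fin n)) : ℕ :=
  sInf {k | ∃ L : List (Equiv.Perm (Fin n)),
    L.length = k ∧ (∀ s ∈ L, IsAdjacentTransposition s) ∧ L.prod = σ}

/-- The weak Bruhat order on `Sₙ`: `ω ≤ σ` iff there is `τ` with `σ = τ · ω` and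
`l(σ) = l(τ) + l(ω)`. -/
def weakLe {n : ℕ} (ω σ : Equiv.Perm (Fin n)) : Prop :=
  ∃ τ : Equiv.Perm (Fin n), σ = τ * ω ∧ permLength σ = permLength τ + permLength ω

/-- The strict weak Bruhat order. -/
def weakLt {n : ℕ} (ω σ : Equiv.Perm (Fin n)) : Prop :=
  weakLe ω σ ∧ ω ≠ σ

/-- `σ × τ`: the image of `(σ, τ)` under the canonical embedding
`S_p × S_q ↪ S_{p+q}`, where `σ` permutes the first `p` letters and `τ` the last `q`. -/
def blockSum {p q : ℕ} (σ : Equiv.Perm (Fin p)) (τ : Equiv.Perm (Fin q)) :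
    Equiv.Perm (Fin (p + q)) :=
  finSumFinEquiv.symm.trans ((Equiv.sumCongr σ τ).trans finSumFinEquiv)

/-- `ξ` is a `(p,q)`-shuffle: `ξ(1) < … < ξ(p)` and `ξ(p+1) < … < ξ(p+q)`. -/
def IsShuffle (p q : ℕ) (ξ : Equiv.Perm (Fin (p + q))) : Prop :=
  (∀ i j : Fin (p + q), (i : ℕ) < (j : ℕ) → (j : ℕ) < p → ξ i < ξ j) ∧
  (∀ i j : Fin (p + q), p ≤ (i : ℕ) → (i : ℕ) < (j : ℕ) → ξ i < ξ j)

/-- `ξ_{p,q} ∈ S_{p+q}`: the permutation with one-line notation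
`(q+1, q+2, …, q+p, 1, 2, …, q)`. -/
def xi (p q : ℕ) : Equiv.Perm (Fin (p + q)) :=
  finSumFinEquiv.symm.trans ((Equiv.sumComm (Fin p) (Fin q)).trans
    (finSumFinEquiv.trans (finCongr (Nat.add_comm q p))))

/-- Transport of a permutation along an equality of the number of letters. -/
def permCast {m n : ℕ} (h : m = n) (π : Equiv.Perm (Fin m)) : Equiv.Perm (Fin n) :=
  (finCongr h).permCongr π

/-- The grafting `σ ∨ τ ∈ S_{p+q+1}` of `σ ∈ S_p` and `τ ∈ S_q`: in 1-indexed one-line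
notation, `(σ∨τ)(i) = σ(i)` for `1 ≤ i ≤ p`, `(σ∨τ)(p+1) = p+q+1`, and
`(σ∨τ)(i) = τ(i-p-1) + p` for `p+2 ≤ i ≤ p+q+1`.  (Equivalently,
`σ ∨ τ = (σ × τ × 1₁) · s_{p+q} · s_{p+q-1} · ⋯ · s_{p+1}`.) -/
def graft {p q : ℕ} (σ : Equiv.Perm (Fin p)) (τ : Equiv.Perm (Fin q)) :
    Equiv.Perm (Fin (p + q + 1)) :=
  blockSum (blockSum σ τ) (1 : Equiv.Perm (Fin 1)) *
    permCast (by omega) (blockSum (1 : Equiv.Perm (Fin p)) (finRotate (q + 1))⁻¹)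

/-- The `over` operation on permutations: `σ / τ := σ × τ`. -/
def overP {p q : ℕ} (σ : Equiv.Perm (Fin p)) (τ : Equiv.Perm (Fin q)) :
    Equiv.Perm (Fin (p + q)) :=
  blockSum σ τ

/-- The `under` operation on permutations: `σ \ τ := ξ_{p,q} · (σ × τ)`. -/
def underP {p q : ℕ} (σ : Equiv.Perm (Fin p)) (τ : Equiv.Perm (Fin q)) :
    Equiv.Perm (Fin (p + q)) :=
  xi p q * blockSum σ τ

theorem perm_inv_self {n : ℕ} (ω : Equiv.Perm (Fin n)) (x : Fin n) : ω⁻¹ (ω x) = x := by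
  simp

/-- ordered inversion set -/
def invE {n : ℕ} (σ : Equiv.Perm (Fin n)) : Finset (Fin n × Fin n) :=
  Finset.univ.filter fun z => (z.1 < z.2 ∧ σ z.2 < σ z.1) ∨ (z.2 < z.1 ∧ σ z.1 < σ z.2)

/-- the pulled back inversion set -/
def pullE {n : ℕ} (τ ω : Equiv.Perm (Fin n)) : Finset (Fin n × Fin n) :=
  (invE τ).map (Equiv.prodCongr ω ω).symm.toEmbedding

theorem mem_invE {n : ℕ} (σ : Equiv.Perm (Fin n)) (x y : Fin n) :
    (x, y) ∈ invE σ ↔ (x < y ∧ σ y < σ x) ∨ (y < x ∧ σ x < σ y) := by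
  simp [invE]

theorem mem_pullE {n : ℕ} (τ ω : Equiv.Perm (Fin n)) (x y : Fin n) :
    (x, y) ∈ pullE τ ω ↔ (ω x, ω y) ∈ invE τ := by
  unfold pullE
  rw [Finset.mem_map_equiv]
  simp

theorem card_pullE {n : ℕ} (τ ω : Equiv.Perm (Fin n)) :
    (pullE τ ω).card = (invE τ).card := by
  simp [pullE]

theorem invE_mul {n : ℕ} (τ ω : Equiv.Perm (Fin n)) :
    invE (τ * ω) = symmDiff (invE ω) (pullE τ ω) := by
  ext ⟨x, y⟩
  rw [Finset.mem_symmDiff, mem_pullE, mem_invE, mem_invE, mem_invE]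
  simp only [Equiv.Perm.mul_apply]
  by_cases hxy : x = y
  · subst hxy; simp
  have h1 : ω x ≠ ω y := fun h => hxy (ω.injective h)
  have h2 : τ (ω x) ≠ τ (ω y) := fun h => h1 (τ.injective h)
  rcases lt_or_gt_of_ne hxy with a | a <;> rcases lt_or_gt_of_ne h1 with b | b <;>
    rcases lt_or_gt_of_ne h2 with c | c <;> simp [a, b, c, a.not_gt, b.not_gt, c.not_gt]

theorem card_invE_mul {n : ℕ} (τ ω : Equiv.Perm (Fin n)) :
    (invE (τ * ω)).card + 2 * (invE ω ∩ pullE τ ω).card = (invE τ).card + (invE ω).card := by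
  rw [invE_mul, ← card_pullE τ ω, symmDiff_def, Finset.sup_eq_union,
    Finset.card_union_of_disjoint (disjoint_sdiff_sdiff)]
  have h1 := Finset.card_sdiff_add_card_inter (invE ω) (pullE τ ω)
  have h2 := Finset.card_sdiff_add_card_inter (pullE τ ω) (invE ω)
  rw [Finset.inter_comm] at h2
  omega

theorem invE_adj {n : ℕ} (i : ℕ) (h : i + 1 < n) :
    invE (Equiv.swap (⟨i, by omega⟩ : Fin n) ⟨i + 1, h⟩) =
      {(⟨i, by omega⟩, ⟨i + 1, h⟩), (⟨i + 1, h⟩, ⟨i, by omega⟩)} := by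
  ext ⟨⟨x, hx⟩, ⟨y, hy⟩⟩
  rw [mem_invE]
  simp only [Equiv.swap_apply_def, Finset.mem_insert, Finset.mem_singleton, Prod.mk.injEq,
    Fin.mk.injEq, Fin.mk_lt_mk]
  split_ifs <;> simp only [Fin.mk_lt_mk] <;> omega

theorem card_invE_adj {n : ℕ} {s : Equiv.Perm (Fin n)} (hs : IsAdjacentTransposition s) :
    (invE s).card = 2 := by
  obtain ⟨i, h, rfl⟩ := hs
  rw [invE_adj, Finset.card_pair]
  simp

theorem invE_one {n : ℕ} : invE (1 : Equiv.Perm (Fin n)) = ∅ := by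
  ext ⟨x, y⟩
  rw [mem_invE]
  simp only [Equiv.Perm.one_apply, Finset.notMem_empty, iff_false]
  rintro (⟨a, b⟩ | ⟨a, b⟩) <;> exact lt_asymm a b

theorem card_invE_prod {n : ℕ} (L : List (Equiv.Perm (Fin n)))
    (hL : ∀ s ∈ L, IsAdjacentTransposition s) : (invE L.prod).card ≤ 2 * L.length := by
  induction L with
  | nil => simp [invE_one]
  | cons s L ih =>
    have h1 := ih fun t ht => hL t (List.mem_cons_of_mem _ ht)
    have h2 := card_invE_adj (hL s List.mem_cons_self)
    have h3 := card_invE_mul s L.prod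
    rw [List.prod_cons, List.length_cons]
    omega

theorem exists_descent {n : ℕ} (σ : Equiv.Perm (Fin n)) (hσ : σ ≠ 1) :
    ∃ (i : ℕ) (h : i + 1 < n), σ.symm ⟨i + 1, h⟩ < σ.symm ⟨i, by omega⟩ := by
  by_contra! hcon
  apply hσ
  have hm : StrictMono σ.symm := by
    cases n with
    | zero => intro a; exact a.elim0
    | succ m =>
      rw [Fin.strictMono_iff_lt_succ]
      intro i
      refine lt_of_le_of_ne (hcon i.val (by omega)) ?_
      intro h
      have := σ.symm.injective h
      simp [Fin.ext_iff] at this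
  have h1 : (σ.symm : Fin n → Fin n) = id := by
    have := hm.range_inj (g := id) strictMono_id
    exact this.1 (by simp [σ.symm.surjective.range_eq])
  ext x
  have := congrFun h1 (σ x)
  simp at this
  simp [← this]

theorem exists_word {n : ℕ} (k : ℕ) (σ : Equiv.Perm (Fin n)) (hk : (invE σ).card ≤ k) :
    ∃ L : List (Equiv.Perm (Fin n)), (∀ s ∈ L, IsAdjacentTransposition s) ∧
      L.prod = σ ∧ 2 * L.length ≤ (invE σ).card := by
  induction k using Nat.strong_induction_on generalizing σ with
  | _ k ih =>
  by_cases hσ : σ = 1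
  · exact ⟨[], by simp, by simp [hσ], by simp⟩
  obtain ⟨i, h, hd⟩ := exists_descent σ hσ
  set a : Fin n := ⟨i, by omega⟩ with ha
  set b : Fin n := ⟨i + 1, h⟩ with hb
  have hab : a < b := by simp [ha, hb]
  have hs : IsAdjacentTransposition (Equiv.swap a b) := ⟨i, h, rfl⟩
  have h2 := card_invE_adj hs
  have h3 := card_invE_mul (Equiv.swap a b) σ
  have hsub : ({(σ.symm b, σ.symm a), (σ.symm a, σ.symm b)} : Finset (Fin n × Fin n)) ⊆
      invE σ ∩ pullE (Equiv.swap a b) σ := by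
    intro z hz
    simp only [Finset.mem_insert, Finset.mem_singleton] at hz
    rcases hz with rfl | rfl <;>
      rw [Finset.mem_inter, mem_pullE, mem_invE, mem_invE] <;> simp [hd, hab]
  have h4 := Finset.card_le_card hsub
  rw [Finset.card_pair (by intro h; exact hd.ne (Prod.mk.inj h).1)] at h4
  obtain ⟨L, hL, hp, hl⟩ := ih (invE (Equiv.swap a b * σ)).card (by omega) _ le_rfl
  refine ⟨Equiv.swap a b :: L, ?_, ?_, ?_⟩
  · intro s hs'
    rcases List.mem_cons.1 hs' with rfl | h'
    · exact hs
    · exact hL s h'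
  · rw [List.prod_cons, hp, ← mul_assoc, Equiv.swap_mul_self, one_mul]
  · rw [List.length_cons]; omega

theorem two_permLength {n : ℕ} (σ : Equiv.Perm (Fin n)) :
    2 * permLength σ = (invE σ).card := by
  obtain ⟨L, hL, hp, hl⟩ := exists_word _ σ le_rfl
  apply le_antisymm
  · have : permLength σ ≤ L.length := Nat.sInf_le ⟨L, rfl, hL, hp⟩
    omega
  · obtain ⟨L', h1, h2, h3⟩ := Nat.sInf_mem (s := {k | ∃ L : List (Equiv.Perm (Fin n)),
      L.length = k ∧ (∀ s ∈ L, IsAdjacentTransposition s) ∧ L.prod = σ}) ⟨_, L, rfl, hL, hp⟩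
    have h4 := card_invE_prod L' h2
    rw [h3, h1] at h4
    exact h4

theorem weakLe_iff {n : ℕ} (ω σ : Equiv.Perm (Fin n)) :
    weakLe ω σ ↔ ∀ x y, x < y → ω y < ω x → σ y < σ x := by
  have key : weakLe ω σ ↔ invE ω ∩ pullE (σ * ω⁻¹) ω = ∅ := by
    have e : σ = (σ * ω⁻¹) * ω := by simp
    have h3 := card_invE_mul (σ * ω⁻¹) ω
    rw [← e, ← two_permLength, ← two_permLength, ← two_permLength] at h3
    rw [← Finset.card_eq_zero]
    constructor
    · rintro ⟨τ, h, hl⟩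
      have : τ = σ * ω⁻¹ := by rw [h]; simp
      subst this
      omega
    · intro h
      exact ⟨_, e, by omega⟩
  rw [key, Finset.eq_empty_iff_forall_notMem]
  constructor
  · intro h x y hxy hw
    have := h (x, y)
    rw [Finset.mem_inter, mem_pullE, mem_invE, mem_invE] at this
    simp only [Equiv.Perm.mul_apply, perm_inv_self, hxy, hw, true_and] at this
    have hne : σ x ≠ σ y := fun h => hxy.ne (σ.injective h)
    by_contra hc
    exact this ⟨Or.inl trivial, Or.inr (lt_of_le_of_ne (not_lt.1 hc) hne)⟩
  · rintro h ⟨x, y⟩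
    rw [Finset.mem_inter, mem_pullE, mem_invE, mem_invE]
    simp only [Equiv.Perm.mul_apply, perm_inv_self]
    rintro ⟨⟨a, b⟩ | ⟨a, b⟩, ⟨c, d⟩ | ⟨c, d⟩⟩
    · exact lt_asymm b c
    · exact lt_asymm d (h _ _ a b)
    · exact lt_asymm d (h _ _ a b)
    · exact lt_asymm b c

theorem blockSum_lt {p q : ℕ} (σ : Equiv.Perm (Fin p)) (τ : Equiv.Perm (Fin q))
    (x : Fin (p + q)) (h : x.val < p) : (blockSum σ τ x).val = σ ⟨x, h⟩ := by
  change (blockSum σ τ (Fin.castAdd q ⟨x, h⟩)).val = _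
  simp only [blockSum, Equiv.trans_apply, finSumFinEquiv_symm_apply_castAdd]
  simp

theorem blockSum_ge {p q : ℕ} (σ : Equiv.Perm (Fin p)) (τ : Equiv.Perm (Fin q))
    (x : Fin (p + q)) (y : Fin q) (h : x.val = p + y) :
    (blockSum σ τ x).val = p + τ y := by
  have : x = Fin.natAdd p y := Fin.ext h
  rw [this]
  simp [blockSum]

theorem permCast_val {m n : ℕ} (h : m = n) (π : Equiv.Perm (Fin m)) (x : Fin n) :
    (permCast h π x).val = π ⟨x, by omega⟩ := by
  subst h; rfl

theorem graft_lt {p q : ℕ} (σ : Equiv.Perm (Fin p)) (τ : Equiv.Perm (Fin q))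
    (x : Fin (p + q + 1)) (h : x.val < p) : (graft σ τ x).val = σ ⟨x, h⟩ := by
  unfold graft
  rw [Equiv.Perm.mul_apply]
  generalize hy : permCast _ _ x = y
  have h1 : y.val = x.val := by
    rw [← hy, permCast_val, blockSum_lt _ _ _ (by simpa using h)]; rfl
  rw [blockSum_lt _ _ _ (by omega), blockSum_lt _ _ _ (by simp; omega)]
  simp [h1]

theorem graft_eq {p q : ℕ} (σ : Equiv.Perm (Fin p)) (τ : Equiv.Perm (Fin q))
    (x : Fin (p + q + 1)) (h : x.val = p) : (graft σ τ x).val = p + q := by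
  unfold graft
  rw [Equiv.Perm.mul_apply]
  generalize hy : permCast _ _ x = y
  have h1 : y.val = p + q := by
    rw [← hy, permCast_val, blockSum_ge _ _ _ 0 (by simpa using h)]
    have : (finRotate (q + 1))⁻¹ 0 = Fin.last q := by
      rw [Equiv.Perm.inv_eq_iff_eq, finRotate_last]
    rw [this]; simp
  rw [blockSum_ge _ _ _ 0 (by simpa using h1)]
  simp

theorem graft_gt {p q : ℕ} (σ : Equiv.Perm (Fin p)) (τ : Equiv.Perm (Fin q))
    (x : Fin (p + q + 1)) (z : Fin q) (h : x.val = p + 1 + z) :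
    (graft σ τ x).val = p + τ z := by
  unfold graft
  rw [Equiv.Perm.mul_apply]
  generalize hy : permCast _ _ x = y
  have h1 : y.val = p + z := by
    rw [← hy, permCast_val, blockSum_ge _ _ _ z.succ (by simp; omega)]
    have : (finRotate (q + 1))⁻¹ z.succ = z.castSucc := by
      rw [Equiv.Perm.inv_eq_iff_eq]
      simp
    rw [this]; simp
  rw [blockSum_lt _ _ _ (by omega), blockSum_ge _ _ _ z (by simpa using h1)]

/-- Lemma 1.7: if `σ ≤ σ'` in `S_p` and `τ ≤ τ'` in `S_q` for the weak
Bruhat orders, then `σ ∨ τ ≤ σ' ∨ τ'` in `S_{p+q+1}`. -/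
theorem stmt4 (p q : ℕ) (σ σ' : Equiv.Perm (Fin p)) (τ τ' : Equiv.Perm (Fin q))
    (hσ : weakLe σ σ') (hτ : weakLe τ τ') :
    weakLe (graft σ τ) (graft σ' τ') := by
  rw [weakLe_iff] at *
  have tri : ∀ x : Fin (p + q + 1), (∃ h : x.val < p, True) ∨ x.val = p ∨
      ∃ z : Fin q, x.val = p + 1 + z := by
    intro x
    rcases lt_trichotomy x.val p with h | h | h
    · exact Or.inl ⟨h, trivial⟩
    · exact Or.inr (Or.inl h)
    · exact Or.inr (Or.inr ⟨⟨x.val - p - 1, by omega⟩, by simp; omega⟩)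
  intro x y hxy hlt
  rw [Fin.lt_def] at *
  rcases tri x with ⟨hx, -⟩ | hx | ⟨z, hx⟩ <;> rcases tri y with ⟨hy, -⟩ | hy | ⟨w, hy⟩
  · rw [graft_lt _ _ _ hx, graft_lt _ _ _ hy] at *
    exact hσ ⟨x, hx⟩ ⟨y, hy⟩ hxy hlt
  · rw [graft_lt _ _ _ hx, graft_eq _ _ _ hy] at *
    omega
  · rw [graft_lt _ _ _ hx, graft_gt _ _ _ _ hy] at *
    omega
  · omega
  · omega
  · rw [graft_eq _ _ _ hx, graft_gt _ _ _ _ hy] at *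
    omega
  · omega
  · omega
  · rw [graft_gt _ _ _ _ hx, graft_gt _ _ _ _ hy] at *
    have := hτ z w (by rw [Fin.lt_def]; omega) (by rw [Fin.lt_def]; omega)
    rw [Fin.lt_def] at this
    omega
end

section
/- Let σ ∈ S_n be a permutation with σ(i) = n for some 1 ≤ i ≤ n. Then there exist unique elements σ^l ∈ S_{i−1}, σ^r ∈ S_{n−i} and γ ∈ Sh(i−1, n−i) such that σ = (γ × 1_1)·(σ^l ∨ σ^r). -/
theorem aux_bs_cast {p q : ℕ} (σ : Equiv.Perm (Fin p)) (τ : Equiv.Perm (Fin q)) (i : Fin p) :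
    blockSum σ τ (Fin.castAdd q i) = Fin.castAdd q (σ i) := by
  simp [blockSum]

theorem aux_bs_nat {p q : ℕ} (σ : Equiv.Perm (Fin p)) (τ : Equiv.Perm (Fin q)) (i : Fin q) :
    blockSum σ τ (Fin.natAdd p i) = Fin.natAdd p (τ i) := by
  simp [blockSum]

theorem aux_bs_mul {p q : ℕ} (σ σ' : Equiv.Perm (Fin p)) (τ τ' : Equiv.Perm (Fin q)) :
    blockSum (σ * σ') (τ * τ') = blockSum σ τ * blockSum σ' τ' := by
  ext x
  induction x using Fin.addCases <;> simp [aux_bs_cast, aux_bs_nat]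

theorem aux_bs_one {p q : ℕ} :
    blockSum (1 : Equiv.Perm (Fin p)) (1 : Equiv.Perm (Fin q)) = 1 := by
  ext x
  induction x using Fin.addCases <;> simp [aux_bs_cast, aux_bs_nat]

theorem aux_bs_inj {p : ℕ} {σ σ' : Equiv.Perm (Fin p)}
    (h : blockSum σ (1 : Equiv.Perm (Fin 1)) = blockSum σ' 1) : σ = σ' := by
  ext x
  have := congrArg (fun e => e (Fin.castAdd 1 x)) h
  simp only [aux_bs_cast] at this
  exact congrArg Fin.val (Fin.castAdd_injective p 1 this)

theorem aux_fix {p : ℕ} (π : Equiv.Perm (Fin (p + 1))) (h : π (Fin.last p) = Fin.last p) :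
    ∃ ρ : Equiv.Perm (Fin p), π = blockSum ρ (1 : Equiv.Perm (Fin 1)) := by
  have hne : ∀ i : Fin p, π i.castSucc ≠ Fin.last p := by
    intro i hi
    rw [← h] at hi
    exact (Fin.castSucc_lt_last i).ne (π.injective hi)
  let f : Fin p → Fin p := fun i => (π i.castSucc).castPred (hne i)
  have hf : Function.Injective f := by
    intro i j hij
    have h1 := congrArg Fin.castSucc hij
    simp only [f, Fin.castSucc_castPred] at h1
    exact Fin.castSucc_injective _ (π.injective h1)
  refine ⟨Equiv.ofBijective f (Finite.injective_iff_bijective.mp hf), ?_⟩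
  ext x
  induction x using Fin.addCases with
  | left i =>
    rw [aux_bs_cast]
    simp [f]
    rfl
  | right i =>
    rw [aux_bs_nat]
    have : Fin.natAdd p i = Fin.last p := by ext; simp
    rw [this, h]; simp

theorem aux_rot (a b : ℕ) (h' : a < a + b + 1) (h : a + (b + 1) = a + b + 1) :
    permCast h (blockSum (1 : Equiv.Perm (Fin a)) (finRotate (b + 1))⁻¹) ⟨a, h'⟩
      = Fin.last (a + b) := by
  have h0 : (finCongr h).symm ⟨a, h'⟩ = Fin.natAdd a (0 : Fin (b + 1)) := by
    ext; rfl
  have h1 : (finRotate (b + 1))⁻¹ 0 = Fin.last b := by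
    rw [Equiv.Perm.inv_eq_iff_eq, finRotate_last]
  simp only [permCast, Equiv.permCongr_apply]
  rw [h0, aux_bs_nat, h1]
  ext; simp

theorem aux_shuffle (a b : ℕ) (γ : Equiv.Perm (Fin (a + b))) :
    IsShuffle a b γ ↔ Monotone (γ ∘ Fin.castAdd b) ∧ Monotone (γ ∘ Fin.natAdd a) := by
  constructor
  · rintro ⟨h1, h2⟩
    constructor
    · apply StrictMono.monotone
      intro i j hij
      exact h1 _ _ (by simpa using hij) (by simp)
    · apply StrictMono.monotone
      intro i j hij
      exact h2 _ _ (by simp) (by simpa using hij)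
  · rintro ⟨h1, h2⟩
    constructor
    · intro i j hij hj
      have := h1 (show (⟨i, by omega⟩ : Fin a) ≤ ⟨j, hj⟩ from hij.le)
      refine lt_of_le_of_ne this fun h => ?_
      have := γ.injective h
      omega
    · intro i j hi hij
      have := h2 (show (⟨i - a, by omega⟩ : Fin b) ≤ ⟨j - a, by omega⟩ from by
        simp only [Fin.mk_le_mk]; omega)
      have hi' : Fin.natAdd a (⟨i - a, by omega⟩ : Fin b) = i := by ext; simp; omega
      have hj' : Fin.natAdd a (⟨j - a, by omega⟩ : Fin b) = j := by ext; simp; omega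
      simp only [Function.comp, hi', hj'] at this
      refine lt_of_le_of_ne this fun h => ?_
      have := γ.injective h
      omega

theorem aux_sort_unique {m n : ℕ} {f : Fin m → Fin n} (hf : Function.Injective f)
    {s t : Equiv.Perm (Fin m)} (hs : Monotone (f ∘ s)) (ht : Monotone (f ∘ t)) : s = t := by
  have h := Tuple.unique_monotone hs ht
  ext x
  exact congrArg Fin.val (hf (congrFun h x))

theorem aux_main (a b : ℕ) (ρ : Equiv.Perm (Fin (a + b))) :
    ∃! d : Equiv.Perm (Fin a) × Equiv.Perm (Fin b) × Equiv.Perm (Fin (a + b)),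
      IsShuffle a b d.2.2 ∧ ρ = d.2.2 * blockSum d.1 d.2.1 := by
  have hinv : ∀ (s : Equiv.Perm (Fin a)) (t : Equiv.Perm (Fin b)),
      blockSum s⁻¹ t⁻¹ * blockSum s t = 1 := by
    intro s t
    rw [← aux_bs_mul, inv_mul_cancel, inv_mul_cancel, aux_bs_one]
  have key : ∀ (s : Equiv.Perm (Fin a)) (t : Equiv.Perm (Fin b)),
      IsShuffle a b (ρ * blockSum s t) ↔
        Monotone ((ρ ∘ Fin.castAdd b) ∘ s) ∧ Monotone ((ρ ∘ Fin.natAdd a) ∘ t) := by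
    intro s t
    rw [aux_shuffle]
    have e1 : (ρ * blockSum s t) ∘ Fin.castAdd b = (ρ ∘ Fin.castAdd b) ∘ s := by
      funext x; simp [aux_bs_cast]
    have e2 : (ρ * blockSum s t) ∘ Fin.natAdd a = (ρ ∘ Fin.natAdd a) ∘ t := by
      funext x; simp [aux_bs_nat]
    rw [e1, e2]
  have m1 := Tuple.monotone_sort (ρ ∘ Fin.castAdd b)
  have m2 := Tuple.monotone_sort (ρ ∘ Fin.natAdd a)
  set s := Tuple.sort (ρ ∘ Fin.castAdd b)
  set t := Tuple.sort (ρ ∘ Fin.natAdd a)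
  have i1 : Function.Injective (ρ ∘ Fin.castAdd b) :=
    ρ.injective.comp (Fin.castAdd_injective a b)
  have i2 : Function.Injective (ρ ∘ Fin.natAdd a) :=
    ρ.injective.comp (Fin.natAdd_injective b a)
  refine ⟨(s⁻¹, t⁻¹, ρ * blockSum s t), ⟨(key s t).2 ⟨m1, m2⟩, ?_⟩, ?_⟩
  · have := hinv s⁻¹ t⁻¹
    rw [inv_inv, inv_inv] at this
    simp only [mul_assoc, this, mul_one]
  · rintro ⟨l, r, γ⟩ ⟨hsh, hρ⟩
    simp only at hsh hρ
    have hγ : γ = ρ * blockSum l⁻¹ r⁻¹ := by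
      have := mul_eq_one_comm.mp (hinv l r)
      rw [hρ, mul_assoc, this, mul_one]
    rw [hγ, key] at hsh
    have hs := aux_sort_unique i1 hsh.1 m1
    have ht := aux_sort_unique i2 hsh.2 m2
    rw [hγ, hs, ht, ← hs, ← ht, inv_inv, inv_inv]

/-- Proposition 1.8: let `σ ∈ Sₙ` with `σ(i) = n` for some `1 ≤ i ≤ n`
(here `n = a + b + 1` and `i = a + 1`, so `i - 1 = a` and `n - i = b`; in our 0-indexed
encoding the hypothesis reads `σ(a) = a + b`).  Then there are unique
`σˡ ∈ S_{i-1}`, `σʳ ∈ S_{n-i}` and `γ ∈ Sh(i-1, n-i)` with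
`σ = (γ × 1₁) · (σˡ ∨ σʳ)`. -/
theorem stmt5 (a b : ℕ) (σ : Equiv.Perm (Fin (a + b + 1)))
    (hσ : σ ⟨a, by omega⟩ = ⟨a + b, by omega⟩) :
    ∃! d : Equiv.Perm (Fin a) × Equiv.Perm (Fin b) × Equiv.Perm (Fin (a + b)),
      IsShuffle a b d.2.2 ∧
      σ = blockSum d.2.2 (1 : Equiv.Perm (Fin 1)) * graft d.1 d.2.1 := by
  have hrot := aux_rot a b (by omega) (by omega)
  unfold graft
  set R := permCast (by omega : a + (b + 1) = a + b + 1)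
    (blockSum (1 : Equiv.Perm (Fin a)) (finRotate (b + 1))⁻¹) with hR
  obtain ⟨ρ, hρ⟩ := aux_fix (σ * R⁻¹) (by
    rw [← hrot]
    have hi : ∀ x, R⁻¹ (R x) = x := fun x => R.symm_apply_apply x
    rw [Equiv.Perm.mul_apply, hi, hσ, hrot]; rfl)
  have hiff : ∀ d : Equiv.Perm (Fin a) × Equiv.Perm (Fin b) × Equiv.Perm (Fin (a + b)),
      (IsShuffle a b d.2.2 ∧ σ = blockSum d.2.2 (1 : Equiv.Perm (Fin 1)) *
        (blockSum (blockSum d.1 d.2.1) (1 : Equiv.Perm (Fin 1)) * R)) ↔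
      (IsShuffle a b d.2.2 ∧ ρ = d.2.2 * blockSum d.1 d.2.1) := by
    intro d
    rw [← mul_assoc, ← aux_bs_mul, mul_one, ← mul_inv_eq_iff_eq_mul, hρ]
    exact and_congr_right fun _ => ⟨aux_bs_inj, fun h => by rw [h]⟩
  simp only [hiff]
  exact aux_main a b ρ
end

section
/- For all σ ∈ S_p and τ ∈ S_q: the set {ω·(σ × τ) : ω ∈ Sh²(p,q)} equals the weak Bruhat interval {ω ∈ S_{p+q} : (1_{p−1}∨1_q)·(σ × τ) ≤ ω ≤ σ\τ}, and the set {ω·(σ × τ) : ω ∈ Sh¹(p,q)} equals the weak Bruhat interval {ω ∈ S_{p+q} : σ/τ ≤ ω ≤ (ξ_{p,q−1} × 1_1)·(σ × τ)}. -/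
/-- `Sh¹(p,q)`: the `(p,q)`-shuffles `ω` with `ω(p+q) = p+q`. -/
def Sh1 (p q : ℕ) (ω : Equiv.Perm (Fin (p + q))) : Prop :=
  IsShuffle p q ω ∧ ∀ i : Fin (p + q), (i : ℕ) + 1 = p + q → ω i = i

/-- `Sh²(p,q)`: the `(p,q)`-shuffles `ω` with `ω(p) = p+q`. -/
def Sh2 (p q : ℕ) (ω : Equiv.Perm (Fin (p + q))) : Prop :=
  IsShuffle p q ω ∧ ∀ i : Fin (p + q), (i : ℕ) + 1 = p → ((ω i : ℕ) + 1 = p + q)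

attribute [local instance] Classical.propDecidable


namespace S9
open Equiv

noncomputable def D {n : ℕ} (σ : Perm (Fin n)) : Finset (Fin n × Fin n) :=
  Finset.univ.filter (fun x => ¬ ((x.1 < x.2) ↔ (σ x.1 < σ x.2)))

/-- pullback of `D τ` along `ω` -/
noncomputable def E {n : ℕ} (τ ω : Perm (Fin n)) : Finset (Fin n × Fin n) :=
  Finset.univ.filter (fun x => ¬ ((ω x.1 < ω x.2) ↔ (τ (ω x.1) < τ (ω x.2))))

lemma mem_D {n : ℕ} (σ : Perm (Fin n)) (x) :
    x ∈ D σ ↔ ¬ ((x.1 < x.2) ↔ (σ x.1 < σ x.2)) := by simp [D]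

lemma mem_E {n : ℕ} (τ ω : Perm (Fin n)) (x) :
    x ∈ E τ ω ↔ ¬ ((ω x.1 < ω x.2) ↔ (τ (ω x.1) < τ (ω x.2))) := by simp [E]

lemma card_E {n : ℕ} (τ ω : Perm (Fin n)) : (E τ ω).card = (D τ).card := by
  apply Finset.card_bij (fun x _ => (ω x.1, ω x.2))
  · intro x hx
    simpa [E, D] using hx
  · rintro ⟨a, b⟩ _ ⟨c, d⟩ _ h
    simpa using h
  · rintro ⟨a, b⟩ h
    refine ⟨(ω.symm a, ω.symm b), ?_, by simp⟩
    simpa [E, D] using h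

lemma D_mul {n : ℕ} (τ ω : Perm (Fin n)) : 
    D (τ * ω) = (D ω \ E τ ω) ∪ (E τ ω \ D ω) := by
  ext x
  simp only [Finset.mem_union, Finset.mem_sdiff, mem_D, mem_E]
  rw [Perm.mul_apply, Perm.mul_apply]
  tauto

lemma card_mul {n : ℕ} (τ ω : Perm (Fin n)) :
    (D (τ * ω)).card + 2 * (D ω ∩ E τ ω).card = (D τ).card + (D ω).card := by
  rw [D_mul, Finset.card_union_of_disjoint]
  · have h1 := Finset.card_sdiff_add_card_inter (D ω) (E τ ω)
    have h2 := Finset.card_sdiff_add_card_inter (E τ ω) (D ω)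
    rw [Finset.inter_comm] at h2
    rw [card_E] at h2
    omega
  · rw [Finset.disjoint_left]
    intro x
    simp only [Finset.mem_sdiff]
    tauto

lemma D_adj {n : ℕ} (i : ℕ) (h : i + 1 < n) :
    D (swap (⟨i, by omega⟩ : Fin n) ⟨i + 1, h⟩) =
      {((⟨i, by omega⟩ : Fin n), (⟨i+1, h⟩ : Fin n)), (⟨i+1, h⟩, ⟨i, by omega⟩)} := by
  ext ⟨a, b⟩
  simp only [mem_D, swap_apply_def, Finset.mem_insert,
    Finset.mem_singleton, Prod.mk.injEq]
  rcases a with ⟨a, ha⟩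
  rcases b with ⟨b, hb⟩
  simp only [Fin.mk.injEq]
  split_ifs <;> simp only [Fin.mk_lt_mk, not_true_eq_false, false_iff] <;> omega

lemma card_adj {n : ℕ} (s : Perm (Fin n)) (hs : IsAdjacentTransposition s) :
    (D s).card = 2 := by
  obtain ⟨i, h, rfl⟩ := hs
  rw [D_adj, Finset.card_pair]
  simp

lemma card_prod_le {n : ℕ} (L : List (Perm (Fin n))) (hL : ∀ s ∈ L, IsAdjacentTransposition s) :
    (D L.prod).card ≤ 2 * L.length := by
  induction L with
  | nil => simp [D]
  | cons s L ih =>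
    have h1 := card_mul s L.prod
    have h2 := card_adj s (hL s (by simp))
    have h3 := ih (fun t ht => hL t (by simp [ht]))
    simp only [List.prod_cons, List.length_cons]
    omega

lemma exists_desc {n : ℕ} (σ : Perm (Fin n)) (h : σ ≠ 1) :
    ∃ (i : ℕ) (hi : i + 1 < n), σ.symm ⟨i + 1, hi⟩ < σ.symm ⟨i, by omega⟩ := by
  by_contra! hc
  apply h
  have hm : StrictMono σ.symm := by
    cases n with
    | zero => intro a; exact a.elim0
    | succ n =>
      rw [Fin.strictMono_iff_lt_succ]
      intro i
      apply lt_of_le_of_ne (hc i (by omega))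
      intro he
      have := σ.symm.injective he
      simp [Fin.ext_iff] at this
  have : σ.symm = 1 := by
    ext a
    have h0 : hm.orderIsoOfSurjective _ σ.symm.surjective = OrderIso.refl _ :=
      Subsingleton.elim _ _
    have h1 : (hm.orderIsoOfSurjective _ σ.symm.surjective) a = a := by rw [h0]; rfl
    exact congrArg Fin.val h1
  calc σ = σ.symm.symm := by simp
    _ = 1 := by rw [this]; rfl

lemma exists_list {n : ℕ} (k : ℕ) : ∀ σ : Perm (Fin n), (D σ).card ≤ k →
    ∃ L : List (Perm (Fin n)), 2 * L.length = (D σ).card ∧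
      (∀ s ∈ L, IsAdjacentTransposition s) ∧ L.prod = σ := by
  induction k with
  | zero =>
    intro σ h
    by_cases h1 : σ = 1
    · subst h1
      exact ⟨[], by simp [D], by simp, by simp⟩
    · obtain ⟨i, hi, hd⟩ := exists_desc σ h1
      exfalso
      have : (σ.symm ⟨i + 1, hi⟩, σ.symm ⟨i, by omega⟩) ∈ D σ := by
        simp [D, hd]
      have := Finset.card_pos.2 ⟨_, this⟩
      omega
  | succ k ih =>
    intro σ h
    by_cases h1 : σ = 1
    · subst h1
      exact ⟨[], by simp [D], by simp, by simp⟩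
    · obtain ⟨i, hi, hd⟩ := exists_desc σ h1
      set s : Perm (Fin n) := swap ⟨i, by omega⟩ ⟨i + 1, hi⟩ with hs
      have hadj : IsAdjacentTransposition s := ⟨i, hi, rfl⟩
      have hsub : E s σ ⊆ D σ := by
        rintro ⟨a, b⟩ hab
        have : (σ a, σ b) ∈ D s := by simpa [E, D] using hab
        rw [hs, D_adj] at this
        simp only [Finset.mem_insert, Finset.mem_singleton, Prod.mk.injEq] at this
        have ea : ∀ x y, σ x = y → x = σ.symm y := fun x y h => by simp [← h]
        simp only [D, Finset.mem_filter, Finset.mem_univ, true_and]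
        rcases this with ⟨h1, h2⟩ | ⟨h1, h2⟩
        · rw [h1, h2, ea _ _ h1, ea _ _ h2]
          simp [hd.le]
        · rw [h1, h2, ea _ _ h1, ea _ _ h2]
          simp [hd]
      have h2 := card_mul s σ
      rw [Finset.inter_eq_right.2 hsub, card_E, card_adj s hadj] at h2
      obtain ⟨L, hL1, hL2, hL3⟩ := ih (s * σ) (by omega)
      refine ⟨s :: L, ?_, ?_, ?_⟩
      · simp only [List.length_cons]; omega
      · intro t ht
        rcases List.mem_cons.1 ht with rfl | ht
        · exact hadj
        · exact hL2 t ht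
      · rw [List.prod_cons, hL3, ← mul_assoc, hs, swap_mul_self, one_mul]

lemma card_D {n : ℕ} (σ : Perm (Fin n)) : (D σ).card = 2 * permLength σ := by
  obtain ⟨L, h1, h2, h3⟩ := exists_list _ σ le_rfl
  have hne : L.length ∈ {k | ∃ L : List (Equiv.Perm (Fin n)),
    L.length = k ∧ (∀ s ∈ L, IsAdjacentTransposition s) ∧ L.prod = σ} := ⟨L, rfl, h2, h3⟩
  have ha : permLength σ ≤ L.length := Nat.sInf_le hne
  obtain ⟨M, m1, m2, m3⟩ := Nat.sInf_mem ⟨_, hne⟩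
  have hb := card_prod_le M m2
  rw [m3, m1] at hb
  change _ ≤ 2 * permLength σ at hb
  omega

lemma weakLe_iff {n : ℕ} (ω σ : Perm (Fin n)) : weakLe ω σ ↔
    ∀ i j, i < j → ω j < ω i → σ j < σ i := by
  have key : weakLe ω σ ↔ D ω ⊆ D σ := by
    have hσ : σ = (σ * ω⁻¹) * ω := by simp
    have hc := card_mul (σ * ω⁻¹) ω
    have : weakLe ω σ ↔ (D ω ∩ E (σ * ω⁻¹) ω).card = 0 := by
      rw [← hσ, card_D, card_D, card_D] at hc
      constructor
      · rintro ⟨τ, rfl, h⟩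
        simp only [mul_inv_cancel_right] at hc ⊢
        omega
      · intro h
        exact ⟨_, hσ, by omega⟩
    rw [this, Finset.card_eq_zero]
    have h2 := D_mul (σ * ω⁻¹) ω
    rw [← hσ] at h2
    rw [h2, Finset.ext_iff]
    constructor
    · intro h x hx
      have := h x
      simp only [Finset.mem_inter, Finset.notMem_empty, Finset.mem_union, Finset.mem_sdiff] at *
      tauto
    · intro h x
      have := @h x
      simp only [Finset.mem_inter, Finset.notMem_empty, Finset.mem_union, Finset.mem_sdiff] at *
      tauto
  rw [key]
  constructor
  · intro h i j hij hω
    have := @h (i, j) (by simp [D, hij, hω.le])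
    simp only [D, Finset.mem_filter, Finset.mem_univ, true_and, hij, true_iff, not_lt] at this
    exact lt_of_le_of_ne this (fun e => hij.ne (σ.injective e).symm)
  · rintro h ⟨i, j⟩ hx
    simp only [D, Finset.mem_filter, Finset.mem_univ, true_and] at hx ⊢
    rcases lt_trichotomy i j with hij | rfl | hij
    · have h1 : ω j < ω i := by
        apply lt_of_le_of_ne
        · simpa [hij] using hx
        · exact fun e => hij.ne (ω.injective e).symm
      have := h i j hij h1
      simp [hij, this.le]
    · simp at hx
    · have h1 : ω i < ω j := by
        simpa [hij.le, not_lt.2 hij.le] using hx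
      have := h j i hij h1
      simp [not_lt.2 hij.le, this]

lemma blockSum_val {p q : ℕ} (σ : Perm (Fin p)) (τ : Perm (Fin q)) (i : Fin (p + q)) :
    (blockSum σ τ i : ℕ) = if h : (i : ℕ) < p then (σ ⟨i, h⟩ : ℕ)
      else p + (τ ⟨i - p, by omega⟩ : ℕ) := by
  refine Fin.addCases (fun a => ?_) (fun a => ?_) i
  · simp [blockSum]
  · simp [blockSum]

lemma xi_val {p q : ℕ} (i : Fin (p + q)) :
    (xi p q i : ℕ) = if (i : ℕ) < p then q + i else i - p := by
  refine Fin.addCases (fun a => ?_) (fun a => ?_) i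
  · simp [xi, Nat.add_comm]
  · simp [xi]

lemma permCast_val {m n : ℕ} (h : m = n) (π : Perm (Fin m)) (i : Fin n) :
    (permCast h π i : ℕ) = π ⟨i, by omega⟩ := by
  subst h; rfl

lemma blockSum_one {p q : ℕ} : blockSum (1 : Perm (Fin p)) (1 : Perm (Fin q)) = 1 := by
  ext i
  rw [blockSum_val]
  split_ifs <;> simp
  omega

lemma rot_inv_val {q : ℕ} (i : Fin (q + 1)) :
    ((finRotate (q + 1))⁻¹ i : ℕ) = if (i : ℕ) = 0 then q else i - 1 := by
  obtain ⟨j, rfl⟩ := (finRotate (q + 1)).surjective i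
  have e : (finRotate (q + 1))⁻¹ (finRotate (q + 1) j) = j := Equiv.symm_apply_apply _ _
  rw [e, coe_finRotate]
  have := j.isLt
  by_cases h : j = Fin.last q
  · simp [h]
  · simp [h]

lemma graft_val {p q : ℕ} (i : Fin (p + q + 1)) :
    (graft (1 : Perm (Fin p)) (1 : Perm (Fin q)) i : ℕ) =
      if (i : ℕ) < p then (i : ℕ) else if (i : ℕ) = p then p + q else i - 1 := by
  rw [graft, blockSum_one, blockSum_one, one_mul, permCast_val, blockSum_val]
  simp only [rot_inv_val]
  split_ifs <;> (try simp) <;> omega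

lemma blockSum_lt {p q : ℕ} (σ : Perm (Fin p)) (τ : Perm (Fin q)) (i : Fin (p + q)) :
    (blockSum σ τ i : ℕ) < p ↔ (i : ℕ) < p := by
  rw [blockSum_val]
  split_ifs with h
  · simp [h]
  · simp [h]

lemma main {p q : ℕ} (π α β ω : Perm (Fin (p + q)))
    (hπ : ∀ i, (π i : ℕ) < p ↔ (i : ℕ) < p)
    (hα : IsShuffle p q α) (hβ : IsShuffle p q β) :
    (weakLe (α * π) (ω * π) ∧ weakLe (ω * π) (β * π)) ↔
    (IsShuffle p q ω ∧ ∀ a b : Fin (p + q), (a : ℕ) < p → p ≤ (b : ℕ) →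
      (α b < α a → ω b < ω a) ∧ (ω b < ω a → β b < β a)) := by
  simp only [weakLe_iff, Perm.mul_apply]
  constructor
  · rintro ⟨h1, h2⟩
    have gen : ∀ a b : Fin (p + q), a < b → α a < α b → β a < β b → ω a < ω b := by
      intro a b hab ha hb
      obtain ⟨i, rfl⟩ := π.surjective a
      obtain ⟨j, rfl⟩ := π.surjective b
      rcases lt_trichotomy i j with hij | rfl | hij
      · by_contra hc
        have hc' : ω (π j) < ω (π i) := lt_of_le_of_ne (not_lt.1 hc)
          (fun e => hab.ne (ω.injective e).symm)
        exact absurd (h2 i j hij hc') (not_lt.2 hb.le)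
      · exact absurd hab (lt_irrefl _)
      · exact h1 j i hij ha
    refine ⟨⟨fun i j hij hj => gen i j hij (hα.1 i j hij hj) (hβ.1 i j hij hj),
      fun i j hi hij => gen i j hij (hα.2 i j hi hij) (hβ.2 i j hi hij)⟩, ?_⟩
    intro a b ha hb
    obtain ⟨i, rfl⟩ := π.surjective a
    obtain ⟨j, rfl⟩ := π.surjective b
    have hi := (hπ i).1 ha
    have hj : p ≤ (j : ℕ) := by
      by_contra hc
      have := (hπ j).2 (by omega)
      omega
    have hij : i < j := by
      rw [Fin.lt_def]; omega
    exact ⟨h1 i j hij, h2 i j hij⟩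
  · rintro ⟨hω, hx⟩
    have mono : ∀ γ : Perm (Fin (p + q)), IsShuffle p q γ → ∀ a b : Fin (p + q),
        ((a : ℕ) < p ↔ (b : ℕ) < p) → (γ a < γ b ↔ a < b) := by
      intro γ hγ a b hab
      have aux : ∀ a b : Fin (p + q), ((a : ℕ) < p ↔ (b : ℕ) < p) → a < b → γ a < γ b := by
        intro a b hab hlt
        by_cases hb : (b : ℕ) < p
        · exact hγ.1 a b hlt hb
        · exact hγ.2 a b (by omega) hlt
      refine ⟨fun h => ?_, aux a b hab⟩
      rcases lt_trichotomy a b with h' | rfl | h'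
      · exact h'
      · exact absurd h (lt_irrefl _)
      · exact absurd h (not_lt.2 (aux b a hab.symm h').le)
    have both : ∀ i j : Fin (p + q), i < j → (α (π j) < α (π i) → ω (π j) < ω (π i)) ∧
        (ω (π j) < ω (π i) → β (π j) < β (π i)) := by
      intro i j hij
      by_cases hs : ((π j : ℕ) < p ↔ (π i : ℕ) < p)
      · rw [mono α hα _ _ hs, mono ω hω _ _ hs, mono β hβ _ _ hs]
        exact ⟨id, id⟩
      · have h1 := hπ i
        have h2 := hπ j
        rw [Fin.lt_def] at hij
        exact hx _ _ (by omega) (by omega)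
    exact ⟨fun i j hij => (both i j hij).1, fun i j hij => (both i j hij).2⟩

lemma image_eq {n : ℕ} (P Q : Perm (Fin n) → Prop) [DecidablePred P] [DecidablePred Q] (π : Perm (Fin n))
    (h : ∀ ω, P ω ↔ Q (ω * π)) :
    (Finset.univ.filter P).image (fun ω => ω * π) = Finset.univ.filter Q := by
  ext x
  simp only [Finset.mem_image, Finset.mem_filter, Finset.mem_univ, true_and]
  constructor
  · rintro ⟨ω, hω, rfl⟩
    exact (h ω).1 hω
  · intro hx
    exact ⟨x * π⁻¹, (h _).2 (by simpa using hx), by simp⟩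

end S9

/-- Proposition 4.6: for `σ ∈ S_p`, `τ ∈ S_q`,
`{ω · (σ × τ) : ω ∈ Sh²(p,q)}` equals the weak Bruhat interval
`{ω : (1_{p-1} ∨ 1_q) · (σ × τ) ≤ ω ≤ σ\τ}`, and `{ω · (σ × τ) : ω ∈ Sh¹(p,q)}` equals
the weak Bruhat interval `{ω : σ/τ ≤ ω ≤ (ξ_{p,q-1} × 1₁) · (σ × τ)}`. -/
theorem stmt9 (p q : ℕ) (hp : 1 ≤ p) (hq : 1 ≤ q)
    (σ : Equiv.Perm (Fin p)) (τ : Equiv.Perm (Fin q)) :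
    ((Finset.univ.filter (Sh2 p q)).image (fun ω => ω * blockSum σ τ) =
      Finset.univ.filter (fun ω =>
        weakLe (permCast (by omega : p - 1 + q + 1 = p + q)
            (graft (1 : Equiv.Perm (Fin (p - 1))) (1 : Equiv.Perm (Fin q))) *
            blockSum σ τ) ω ∧
        weakLe ω (underP σ τ))) ∧
    ((Finset.univ.filter (Sh1 p q)).image (fun ω => ω * blockSum σ τ) =
      Finset.univ.filter (fun ω =>
        weakLe (overP σ τ) ω ∧
        weakLe ω (permCast (by omega : p + (q - 1) + 1 = p + q)
            (blockSum (xi p (q - 1)) (1 : Equiv.Perm (Fin 1))) * blockSum σ τ))) := by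
  constructor
  · refine S9.image_eq _ _ _ ?_
    intro ω
    unfold underP
    rw [S9.main _ _ _ _ (S9.blockSum_lt σ τ)]
    · unfold Sh2
      apply and_congr_right
      intro hω
      simp only [Fin.lt_def, S9.permCast_val, S9.graft_val, S9.xi_val]
      constructor
      · intro h a b ha hb
        refine ⟨fun hab => ?_, fun _ => ?_⟩
        · have hap : (a : ℕ) + 1 = p := by
            by_contra hc
            split_ifs at hab <;> omega
          have h1 := h a hap
          have h2 : (ω b : ℕ) ≠ ω a := fun e => by
            have := ω.injective (Fin.ext e)
            subst this; omega
          have := (ω b).isLt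
          omega
        · split_ifs <;> omega
      · intro h i hi
        obtain ⟨x, hx⟩ := ω.surjective ⟨p + q - 1, by omega⟩
        have hxv : (ω x : ℕ) = p + q - 1 := by rw [hx]
        have := (ω i).isLt
        rcases lt_trichotomy (x : ℕ) i with hlt | heq | hgt
        · have := hω.1 x i hlt (by omega)
          rw [Fin.lt_def] at this
          omega
        · have := Fin.ext heq
          subst this
          omega
        · have := (h i x (by omega) (by omega)).1 (by
            have := x.isLt
            split_ifs <;> omega)
          omega
    · constructor
      · intro i j hij hj
        simp only [Fin.lt_def, S9.permCast_val, S9.graft_val]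
        split_ifs <;> omega
      · intro i j hij hj
        simp only [Fin.lt_def, S9.permCast_val, S9.graft_val]
        split_ifs <;> omega
    · constructor
      · intro i j hij hj
        simp only [Fin.lt_def, S9.xi_val]
        split_ifs <;> omega
      · intro i j hij hj
        simp only [Fin.lt_def, S9.xi_val]
        split_ifs <;> omega
  · refine S9.image_eq _ _ _ ?_
    intro ω
    have hv : ∀ i : Fin (p + q), ((permCast (by omega : p + (q - 1) + 1 = p + q)
            (blockSum (xi p (q - 1)) (1 : Equiv.Perm (Fin 1)))) i : ℕ) =
        if (i : ℕ) < p then q - 1 + i else if (i : ℕ) + 1 < p + q then i - p else i := by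
      intro i
      have := i.isLt
      rw [S9.permCast_val, S9.blockSum_val]
      simp only [S9.xi_val]
      split_ifs <;> (try simp) <;> omega
    have hover : overP σ τ = 1 * blockSum σ τ := by rw [one_mul]; rfl
    rw [hover, S9.main _ _ _ _ (S9.blockSum_lt σ τ)]
    · unfold Sh1
      apply and_congr_right
      intro hω
      simp only [Fin.lt_def, hv, Equiv.Perm.one_apply]
      constructor
      · intro h a b ha hb
        refine ⟨fun hab => by omega, fun hab => ?_⟩
        have hb2 : (b : ℕ) + 1 ≠ p + q := by
          intro hc
          have h1 := h b hc
          rw [h1] at hab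
          have := (ω a).isLt
          omega
        split_ifs <;> omega
      · intro h i hi
        obtain ⟨x, hx⟩ := ω.surjective ⟨p + q - 1, by omega⟩
        have hxv : (ω x : ℕ) = p + q - 1 := by rw [hx]
        have := (ω i).isLt
        have hxi : x = i := by
          by_contra hne
          have hne' : (x : ℕ) ≠ i := fun e => hne (Fin.ext e)
          have := x.isLt
          by_cases hxp : (x : ℕ) < p
          · have hne2 : (ω i : ℕ) ≠ ω x := fun e => hne (ω.injective (Fin.ext e)).symm
            have := (h x i hxp (by omega)).2 (by omega)
            split_ifs at this <;> omega
          · have := hω.2 x i (by omega) (by omega)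
            rw [Fin.lt_def] at this
            omega
        subst hxi
        apply Fin.ext
        omega
    · exact ⟨fun i j hij _ => hij, fun i j _ hij => hij⟩
    · constructor
      · intro i j hij hj
        simp only [Fin.lt_def, hv]
        split_ifs <;> omega
      · intro i j hij hj
        simp only [Fin.lt_def, hv]
        split_ifs <;> omega
end

section
/- Let (W,S) be a finite Coxeter system, J ⊆ S, and let x_J^0 ∈ X_J be defined by the unique factorization w^0 = x_J^0 · w_J^0 of the longest element w^0 of W with x_J^0 ∈ X_J and w_J^0 ∈ W_J. Then X_J = {w ∈ W : w ≤ x_J^0} for the weak Bruhat order on W. -/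
open CoxeterSystem in
theorem aux_rev {B : Type*} (i j : B) (m : ℕ) :
    (alternatingWord i j (2 * m)).reverse = alternatingWord j i (2 * m) := by
  induction m with
  | zero => simp [alternatingWord]
  | succ m ih =>
    have h1 : alternatingWord i j (2 * (m + 1)) = (alternatingWord i j (2 * m) ++ [i]) ++ [j] := by
      rw [(by ring : 2 * (m + 1) = 2 * m + 1 + 1), alternatingWord_succ, alternatingWord_succ]
      simp
    have h2 : alternatingWord j i (2 * (m + 1)) = j :: i :: alternatingWord j i (2 * m) := by
      rw [(by ring : 2 * (m + 1) = 2 * m + 1 + 1), alternatingWord_succ', alternatingWord_succ']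
      simp
    rw [h1, h2, List.reverse_append, List.reverse_append, ih]
    simp

open CoxeterSystem in
theorem aux_lis {B W : Type*} [Group W] {M : CoxeterMatrix B} (cs : CoxeterSystem M W) (i j : B)
    (m : ℕ) : cs.leftInvSeq (alternatingWord i j (2 * m)) =
      (List.range (2 * m)).map (fun k => cs.simple i * (cs.simple j * cs.simple i) ^ k) := by
  apply List.ext_getElem
  · simp
  · intro k h1 h2
    have hk : k < 2 * m := by simpa using h1
    rw [getElem_leftInvSeq_alternatingWord cs i j m k hk, prod_alternatingWord_eq_mul_pow]
    have h3 : (2 * k + 1) / 2 = k := by omega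
    simp [h3, Nat.even_add_one]

open Classical CoxeterSystem in
theorem aux_count {B W : Type*} [Group W] {M : CoxeterMatrix B} (cs : CoxeterSystem M W) (i j : B)
    (t : W) : ((cs.rightInvSeq (alternatingWord i j (2 * M i j))).count t : ZMod 2) = 0 := by
  have h0 : cs.rightInvSeq (alternatingWord i j (2 * M i j)) =
      (cs.leftInvSeq (alternatingWord j i (2 * M i j))).reverse := by
    rw [← aux_rev i j, leftInvSeq_reverse, List.reverse_reverse]
  rw [h0, List.count_reverse, aux_lis, two_mul, List.range_add, List.map_append, List.count_append,
    List.map_map]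
  have h1 : ((fun k => cs.simple j * (cs.simple i * cs.simple j) ^ k) ∘ fun x => M i j + x) =
      (fun k => cs.simple j * (cs.simple i * cs.simple j) ^ k) := by
    funext k
    simp [pow_add]
  rw [h1]
  push_cast
  exact CharTwo.add_self_eq_zero _

open Classical in
noncomputable def auxF {B W : Type*} [Group W] {M : CoxeterMatrix B} (cs : CoxeterSystem M W)
    (i : B) : Function.End (W × ZMod 2) :=
  fun p => (cs.simple i * p.1 * cs.simple i, p.2 + if p.1 = cs.simple i then 1 else 0)

open Classical in
theorem auxF_prod {B W : Type*} [Group W] {M : CoxeterMatrix B} (cs : CoxeterSystem M W)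
    (ω : List B) (t : W) (e : ZMod 2) : (ω.map (auxF cs)).prod (t, e) =
      (cs.wordProd ω * t * (cs.wordProd ω)⁻¹, e + ((cs.rightInvSeq ω).count t : ZMod 2)) := by
  induction ω with
  | nil =>
    change (t, e) = _
    simp
  | cons i ω ih =>
    rw [List.map_cons, List.prod_cons]
    change auxF cs i ((ω.map (auxF cs)).prod (t, e)) = _
    rw [ih]
    have hiff : (cs.wordProd ω * t * (cs.wordProd ω)⁻¹ = cs.simple i) ↔
        ((cs.wordProd ω)⁻¹ * cs.simple i * cs.wordProd ω = t) := by
      constructor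
      · intro h
        rw [← h]; group
      · intro h
        rw [← h]; group
    simp only [auxF, CoxeterSystem.rightInvSeq, List.count_cons, cs.wordProd_cons, hiff, beq_iff_eq]
    ext
    · simp [mul_assoc]
    · split_ifs <;> simp [add_assoc]

open CoxeterSystem in
theorem auxF_liftable {B W : Type*} [Group W] {M : CoxeterMatrix B} (cs : CoxeterSystem M W) :
    M.IsLiftable (auxF cs) := by
  classical
  intro i j
  have h : ∀ m : ℕ, (auxF cs i * auxF cs j) ^ m =
      ((alternatingWord i j (2 * m)).map (auxF cs)).prod := by
    intro m
    induction m with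
    | zero => simp [alternatingWord]
    | succ m ih =>
      rw [(by ring : 2 * (m + 1) = 2 * m + 1 + 1), alternatingWord_succ, alternatingWord_succ,
        pow_succ, ih]
      simp [mul_assoc]
  rw [h]
  funext p
  obtain ⟨t, e⟩ := p
  rw [auxF_prod, aux_count, prod_alternatingWord_eq_mul_pow]
  change _ = (t, e)
  simp

noncomputable def auxPhi {B W : Type*} [Group W] {M : CoxeterMatrix B} (cs : CoxeterSystem M W) :
    W →* Function.End (W × ZMod 2) := cs.lift ⟨auxF cs, auxF_liftable cs⟩

noncomputable def eta {B W : Type*} [Group W] {M : CoxeterMatrix B} (cs : CoxeterSystem M W)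
    (w t : W) : ZMod 2 := (auxPhi cs w (t, 0)).2

open Classical in
theorem auxPhi_word {B W : Type*} [Group W] {M : CoxeterMatrix B} (cs : CoxeterSystem M W)
    (ω : List B) (t : W) (e : ZMod 2) : auxPhi cs (cs.wordProd ω) (t, e) =
      (cs.wordProd ω * t * (cs.wordProd ω)⁻¹, e + ((cs.rightInvSeq ω).count t : ZMod 2)) := by
  rw [← auxF_prod]
  have : auxPhi cs (cs.wordProd ω) = (ω.map (auxF cs)).prod := by
    rw [CoxeterSystem.wordProd, map_list_prod, List.map_map]
    congr 2
    funext i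
    exact cs.lift_apply_simple (auxF_liftable cs) i
  rw [this]

open Classical in
theorem eta_word {B W : Type*} [Group W] {M : CoxeterMatrix B} (cs : CoxeterSystem M W)
    (ω : List B) (t : W) : eta cs (cs.wordProd ω) t = ((cs.rightInvSeq ω).count t : ZMod 2) := by
  rw [eta, auxPhi_word, zero_add]

theorem auxPhi_eq {B W : Type*} [Group W] {M : CoxeterMatrix B} (cs : CoxeterSystem M W)
    (w t : W) (e : ZMod 2) : auxPhi cs w (t, e) = (w * t * w⁻¹, e + eta cs w t) := by
  classical
  obtain ⟨ω, -, rfl⟩ := cs.exists_isReduced w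
  rw [auxPhi_word, eta_word]

theorem eta_mul {B W : Type*} [Group W] {M : CoxeterMatrix B} (cs : CoxeterSystem M W)
    (u v t : W) : eta cs (u * v) t = eta cs v t + eta cs u (v * t * v⁻¹) := by
  have h : auxPhi cs (u * v) (t, 0) = auxPhi cs u (auxPhi cs v (t, 0)) := by
    rw [map_mul]; rfl
  rw [eta, h, auxPhi_eq, auxPhi_eq, zero_add]

theorem eta_one {B W : Type*} [Group W] {M : CoxeterMatrix B} (cs : CoxeterSystem M W)
    (t : W) : eta cs 1 t = 0 := by
  classical
  simpa using eta_word cs [] t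

theorem eta_self {B W : Type*} [Group W] {M : CoxeterMatrix B} (cs : CoxeterSystem M W)
    (t : W) (ht : cs.IsReflection t) : eta cs t t = 1 := by
  classical
  obtain ⟨v, i, rfl⟩ := ht
  have hs : eta cs (cs.simple i) (cs.simple i) = 1 := by
    simpa using eta_word cs [i] (cs.simple i)
  have h1 := eta_mul cs v v⁻¹ (v * cs.simple i * v⁻¹)
  rw [mul_inv_cancel, eta_one] at h1
  have e1 : v⁻¹ * (v * cs.simple i * v⁻¹) * v⁻¹⁻¹ = cs.simple i := by group
  rw [e1] at h1
  rw [eta_mul, e1, eta_mul, hs]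
  have e2 : cs.simple i * cs.simple i * (cs.simple i)⁻¹ = cs.simple i := by group
  rw [e2]
  linear_combination -h1

theorem length_lt_of_eta {B W : Type*} [Group W] {M : CoxeterMatrix B} (cs : CoxeterSystem M W)
    (w t : W) (h : eta cs w t = 1) : cs.length (w * t) < cs.length w := by
  classical
  obtain ⟨ω, hω, rfl⟩ := cs.exists_isReduced w
  rw [eta_word] at h
  have hm : t ∈ cs.rightInvSeq ω := by
    by_contra hc
    rw [List.count_eq_zero_of_not_mem hc] at h
    simp at h
  exact (cs.isRightInversion_of_mem_rightInvSeq hω hm).2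

theorem zmod2_cases (a : ZMod 2) : a = 0 ∨ a = 1 := by
  revert a; decide

theorem eta_iff {B W : Type*} [Group W] {M : CoxeterMatrix B} (cs : CoxeterSystem M W)
    (w t : W) (ht : cs.IsReflection t) : eta cs w t = 1 ↔ cs.length (w * t) < cs.length w := by
  refine ⟨length_lt_of_eta cs w t, fun h => ?_⟩
  rcases zmod2_cases (eta cs w t) with h0 | h0
  · exfalso
    have h1 : eta cs (w * t) t = 1 := by
      rw [eta_mul, eta_self cs t ht, mul_inv_cancel_right, h0, add_zero]
    have h2 := length_lt_of_eta cs _ _ h1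
    rw [mul_assoc, ht.mul_self, mul_one] at h2
    omega
  · exact h0

theorem le_longest {B W : Type*} [Group W] {M : CoxeterMatrix B} (cs : CoxeterSystem M W)
    (w0 : W) (hw0 : ∀ w : W, cs.length w ≤ cs.length w0) (ω : List B) (hω : cs.IsReduced ω) :
    ∃ u : W, w0 = u * cs.wordProd ω ∧ cs.length w0 = cs.length u + cs.length (cs.wordProd ω) := by
  induction ω with
  | nil => exact ⟨w0, by simp, by simp⟩
  | cons i ω ih =>
    have hω' : cs.IsReduced ω := by simpa using hω.drop 1
    obtain ⟨u, hu, hl⟩ := ih hω'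
    have hlen : cs.length (cs.wordProd (i :: ω)) = cs.length (cs.wordProd ω) + 1 := by
      rw [hω.eq, hω'.eq]; simp
    set w' := cs.wordProd ω with hw'
    have ht : cs.IsReflection (w'⁻¹ * cs.simple i * w') := ⟨w'⁻¹, i, by simp⟩
    have h1 : eta cs w0 (w'⁻¹ * cs.simple i * w') = 1 := by
      rw [eta_iff cs _ _ ht]
      exact lt_of_le_of_ne (hw0 _) (ht.length_mul_left_ne _)
    have h2 : eta cs w' (w'⁻¹ * cs.simple i * w') = 0 := by
      rcases zmod2_cases (eta cs w' (w'⁻¹ * cs.simple i * w')) with h | h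
      · exact h
      · rw [eta_iff cs _ _ ht] at h
        have e : w' * (w'⁻¹ * cs.simple i * w') = cs.simple i * w' := by group
        rw [e, hw', ← cs.wordProd_cons] at h; rw [← hw'] at h
        omega
    have e : w' * (w'⁻¹ * cs.simple i * w') * w'⁻¹ = cs.simple i := by group
    rw [hu, eta_mul, h2, e, zero_add, eta_iff cs _ _ (cs.isReflection_simple i)] at h1
    refine ⟨u * cs.simple i, ?_, ?_⟩
    · rw [cs.wordProd_cons, hu]
      simp [mul_assoc, hw']
    · rcases cs.length_mul_simple u i with h | h <;> omega

theorem exists_Jword {B W : Type*} [Group W] {M : CoxeterMatrix B} (cs : CoxeterSystem M W)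
    (J : Set B) (u : W) (hu : u ∈ Subgroup.closure (cs.simple '' J)) :
    ∃ ω : List B, (∀ i ∈ ω, i ∈ J) ∧ cs.wordProd ω = u := by
  induction hu using Subgroup.closure_induction with
  | mem x hx =>
    obtain ⟨i, hi, rfl⟩ := hx
    exact ⟨[i], by simpa using hi, by simp⟩
  | one => exact ⟨[], by simp, by simp⟩
  | mul x y _ _ hx hy =>
    obtain ⟨a, ha, rfl⟩ := hx
    obtain ⟨b, hb, rfl⟩ := hy
    refine ⟨a ++ b, ?_, cs.wordProd_append a b⟩
    intro i hi
    rcases List.mem_append.1 hi with h | h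
    · exact ha i h
    · exact hb i h
  | inv x _ hx =>
    obtain ⟨a, ha, rfl⟩ := hx
    exact ⟨a.reverse, by simpa using ha, cs.wordProd_reverse a⟩

theorem exists_Jdescent {B W : Type*} [Group W] {M : CoxeterMatrix B} (cs : CoxeterSystem M W)
    (J : Set B) (n : ℕ) (ω : List B) (hn : ω.length = n) (hJ : ∀ i ∈ ω, i ∈ J)
    (h1 : cs.wordProd ω ≠ 1) :
    ∃ i ∈ J, cs.length (cs.wordProd ω * cs.simple i) < cs.length (cs.wordProd ω) := by
  classical
  induction n using Nat.strong_induction_on generalizing ω with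
  | _ n ih =>
  rcases List.eq_nil_or_concat' ω with rfl | ⟨ω', i, rfl⟩
  · simp at h1
  have hi : i ∈ J := hJ i (by simp)
  by_cases hd : cs.length (cs.wordProd (ω' ++ [i]) * cs.simple i) <
      cs.length (cs.wordProd (ω' ++ [i]))
  · exact ⟨i, hi, hd⟩
  have e : cs.wordProd (ω' ++ [i]) = cs.wordProd ω' * cs.simple i := by
    simp [cs.wordProd_append]
  have hd' : cs.length (cs.wordProd ω' * cs.simple i) < cs.length (cs.wordProd ω') := by
    rw [e] at hd
    simp only [cs.simple_mul_simple_cancel_right] at hd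
    have := cs.length_mul_simple_ne (cs.wordProd ω') i
    omega
  rw [← eta_iff cs _ _ (cs.isReflection_simple i), eta_word] at hd'
  have hm : cs.simple i ∈ cs.rightInvSeq ω' := by
    by_contra hc
    rw [List.count_eq_zero_of_not_mem hc] at hd'
    simp at hd'
  obtain ⟨j, hj, hji⟩ := List.mem_iff_getElem.mp hm
  have hj' : j < ω'.length := by simpa using hj
  have e2 : cs.wordProd (ω' ++ [i]) = cs.wordProd (ω'.eraseIdx j) := by
    rw [e, ← hji, ← List.getD_eq_getElem _ 1 hj, cs.wordProd_mul_getD_rightInvSeq]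
  rw [e2] at h1 ⊢
  refine ih (ω'.eraseIdx j).length ?_ _ rfl ?_ h1
  · have := List.length_eraseIdx_add_one hj'
    simp at hn
    omega
  · intro k hk
    exact hJ k (List.mem_append_left _ (List.mem_of_mem_eraseIdx hk))

theorem coset_min_add {B W : Type*} [Group W] {M : CoxeterMatrix B} (cs : CoxeterSystem M W)
    (J : Set B) (x : W)
    (hx : ∀ u ∈ Subgroup.closure (cs.simple '' J), cs.length x ≤ cs.length (x * u))
    (ω : List B) (hJ : ∀ i ∈ ω, i ∈ J) :
    cs.length (x * cs.wordProd ω) = cs.length x + cs.length (cs.wordProd ω) := by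
  induction ω using List.reverseRecOn with
  | nil => simp
  | append_singleton ω i ih =>
    have ih := ih (fun k hk => hJ k (List.mem_append_left _ hk))
    have hmem : ∀ k ∈ J, cs.simple k ∈ Subgroup.closure (cs.simple '' J) :=
      fun k hk => Subgroup.subset_closure ⟨k, hk, rfl⟩
    have hu : cs.wordProd ω ∈ Subgroup.closure (cs.simple '' J) := by
      apply Subgroup.list_prod_mem
      intro y hy
      obtain ⟨k, hk, rfl⟩ := List.mem_map.1 hy
      exact hmem k (hJ k (List.mem_append_left _ hk))
    have e : cs.wordProd (ω ++ [i]) = cs.wordProd ω * cs.simple i := by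
      simp [cs.wordProd_append]
    rw [e]
    set u := cs.wordProd ω
    have hi := hmem i (hJ i (by simp))
    have h0 : eta cs x (u * cs.simple i * u⁻¹) = 0 := by
      rcases zmod2_cases (eta cs x (u * cs.simple i * u⁻¹)) with h | h
      · exact h
      · have h3 := length_lt_of_eta cs _ _ h
        have h4 := hx _ (mul_mem (mul_mem hu hi) (inv_mem hu))
        omega
    have h1 := eta_mul cs x u (cs.simple i)
    rw [h0, add_zero] at h1
    have h2 := eta_iff cs (x * u) _ (cs.isReflection_simple i)
    rw [h1, eta_iff cs u _ (cs.isReflection_simple i)] at h2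
    rw [← mul_assoc]
    rcases cs.length_mul_simple u i with h | h <;>
      rcases cs.length_mul_simple (x * u) i with h' | h' <;> omega

theorem exists_minimal_length {B W : Type*} [Group W] {M : CoxeterMatrix B}
    (cs : CoxeterSystem M W) (J : Set B) (w : W) :
    ∃ v : Subgroup.closure (cs.simple '' J), ∀ u : Subgroup.closure (cs.simple '' J),
      cs.length (w * v.1) ≤ cs.length (w * u.1) := by
  let f : Subgroup.closure (cs.simple '' J) → ℕ := fun v => cs.length (w * v.1)
  exact ⟨Function.argmin f, fun u => Function.argmin_le f u⟩

theorem XJ_add {B W : Type*} [Group W] {M : CoxeterMatrix B} (cs : CoxeterSystem M W)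
    (J : Set B) (w : W) (hw : ∀ i ∈ J, cs.length w < cs.length (w * cs.simple i))
    (u : W) (hu : u ∈ Subgroup.closure (cs.simple '' J)) :
    cs.length (w * u) = cs.length w + cs.length u := by
  obtain ⟨⟨v, hv⟩, hmin⟩ := exists_minimal_length cs J w
  have hx : ∀ u ∈ Subgroup.closure (cs.simple '' J),
      cs.length (w * v) ≤ cs.length (w * v * u) := by
    intro u hu
    rw [mul_assoc]
    exact hmin ⟨v * u, mul_mem hv hu⟩
  obtain ⟨ω, hJ, hω⟩ := exists_Jword cs J v⁻¹ (inv_mem hv)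
  by_cases h1 : cs.wordProd ω = 1
  · have hv1 : v = 1 := by rw [hω] at h1; simpa using h1
    rw [hv1, mul_one] at hx
    obtain ⟨ω2, hJ2, rfl⟩ := exists_Jword cs J u hu
    exact coset_min_add cs J w hx ω2 hJ2
  · exfalso
    obtain ⟨i, hi, hlt⟩ := exists_Jdescent cs J _ ω rfl hJ h1
    have a1 := coset_min_add cs J _ hx ω hJ
    have a2 := coset_min_add cs J _ hx (ω ++ [i]) (by
      intro k hk
      rcases List.mem_append.1 hk with h | h
      · exact hJ k h
      · rw [List.mem_singleton.1 h]; exact hi)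
    have e : cs.wordProd (ω ++ [i]) = cs.wordProd ω * cs.simple i := by
      simp [cs.wordProd_append]
    rw [e, ← mul_assoc, hω, mul_inv_cancel_right] at a2
    rw [hω, mul_inv_cancel_right] at a1
    rw [hω] at hlt
    have := hw i hi
    omega

/-- Corollary A.4: let `(W, S)` be a finite Coxeter system (encoded by a
Coxeter matrix `M` indexed by `B`, so `S = {cs.simple i : i ∈ B}` and `J ⊆ S` is encoded
by a set `J ⊆ B`), with length function `l = cs.length` and weak Bruhat order
`x ≤ x' ↔ ∃ y, x' = y·x ∧ l(x') = l(y) + l(x)`.  Let `w⁰` be the longest element of `W`,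
and let `w⁰ = x_J⁰ · w_J⁰` be its (unique) factorization with
`x_J⁰ ∈ X_J = {w : l(w·s) > l(w) for all s ∈ J}` and `w_J⁰ ∈ W_J` (the standard parabolic
subgroup generated by `J`).  Then `X_J = {w ∈ W : w ≤ x_J⁰}`. -/
theorem stmt19 {B : Type*} {W : Type*} [Group W] [Fintype W] {M : CoxeterMatrix B}
    (cs : CoxeterSystem M W) (J : Set B)
    (w0 : W) (hw0 : ∀ w : W, cs.length w ≤ cs.length w0)
    (xJ0 wJ0 : W)
    (hxJ0 : ∀ i ∈ J, cs.length xJ0 < cs.length (xJ0 * cs.simple i))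
    (hwJ0 : wJ0 ∈ Subgroup.closure (cs.simple '' J))
    (hfact : w0 = xJ0 * wJ0) :
    ∀ w : W, (∀ i ∈ J, cs.length w < cs.length (w * cs.simple i)) ↔
      (∃ y : W, xJ0 = y * w ∧ cs.length xJ0 = cs.length y + cs.length w) := by
  intro w
  constructor
  · intro hw
    have a1 := XJ_add cs J w hw wJ0 hwJ0
    have a2 := XJ_add cs J xJ0 hxJ0 wJ0 hwJ0
    obtain ⟨ω, hω, he⟩ := cs.exists_isReduced (w * wJ0)
    obtain ⟨y, hy, hl⟩ := le_longest cs w0 hw0 ω hω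
    rw [← he] at hy hl
    refine ⟨y, ?_, ?_⟩
    · rw [hfact, ← mul_assoc] at hy
      exact mul_right_cancel hy
    · rw [hfact] at hl
      omega
  · rintro ⟨y, hy, hl⟩ i hi
    have h1 := hxJ0 i hi
    have h2 := cs.length_mul_le y (w * cs.simple i)
    rw [← mul_assoc, ← hy] at h2
    omega
end
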